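/- For every θ ∈ (0,π), the integral I_θ = −(1/π)∫_{D_θ} 1/(conj(u+1)·(u−1)) da(u) over the open disc D_θ of radius csc θ centered at i·cot θ exists and equals ln(2·sin θ) + i·(π/2 − θ). -/

import Mathlib

open MeasureTheory

/-- The open disc `D_θ` of radius `csc θ` centered at `i·cot θ`. -/
noncomputable def Dtheta (θ : ℝ) : Set ℂ :=
  Metric.ball (Complex.I * (Real.cot θ : ℂ)) ((Real.sin θ)⁻¹)

/-!
The points `a = 1` and `b = -1` lie on the boundary circle of `D_θ`. Integrate in polar coordinates
about the centre `c`. On the circle of radius `r` about `c` one has `conj (u - c) = r² / (u - c)`,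
so there `1 / conj (u - b)` is a Cauchy kernel, up to the factor `u - c` that the angular measure
absorbs, and its pole is the reflection of `b` in the circle. Hence the mean of
`1 / (conj (u - b) * (u - a))` over the circle is `1 / (K - r²)`, where
`K = (a - c) * conj (b - c)`. Integrating against `2πr dr` over `0 < r < R` gives
`-π log (1 - R² / K)`, and for `D_θ` the quotient `R² / K` is `exp (-2iθ)`.
-/

open Metric Real
open scoped ComplexConjugate

section PolarCoordinates

variable {E : Type*} [NormedAddCommGroup E] [NormedSpace ℝ E]

theorem integrableOn_polarCoord_target_iff (f : ℝ × ℝ → E) :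
    IntegrableOn (fun p ↦ p.1 • f (polarCoord.symm p)) polarCoord.target ↔ Integrable f := by
  have measurableSet_target : MeasurableSet polarCoord.target :=
    polarCoord.open_target.measurableSet
  calc IntegrableOn (fun p ↦ p.1 • f (polarCoord.symm p)) polarCoord.target
    _ ↔ IntegrableOn (fun p ↦ |(fderivPolarCoordSymm p).det| • f (polarCoord.symm p))
          polarCoord.target := by
      refine integrableOn_congr_fun (fun p hp ↦ ?_) measurableSet_target
      have radius_pos : 0 < p.1 := hp.1
      simp only [det_fderivPolarCoordSymm, abs_of_pos radius_pos]
    _ ↔ IntegrableOn f polarCoord.source := by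
      rw [← polarCoord.symm_image_target_eq_source]
      exact (integrableOn_image_iff_integrableOn_abs_det_fderiv_smul volume measurableSet_target
        (fun p _ ↦ (hasFDerivAt_polarCoord_symm p).hasFDerivWithinAt) polarCoord.symm.injOn f).symm
    _ ↔ Integrable f := by
      rw [IntegrableOn, Measure.restrict_congr_set polarCoord_source_ae_eq_univ,
        Measure.restrict_univ]

theorem integrableOn_complex_polarCoord_target_iff (f : ℂ → E) :
    IntegrableOn (fun p ↦ p.1 • f (Complex.polarCoord.symm p)) polarCoord.target ↔
      Integrable f := by
  rw [← Complex.volume_preserving_equiv_real_prod.symm.integrable_comp_emb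
    Complex.measurableEquivRealProd.symm.measurableEmbedding]
  exact integrableOn_polarCoord_target_iff (f ∘ Complex.measurableEquivRealProd.symm)

theorem complex_polarCoord_symm_eq_circleMap (p : ℝ × ℝ) :
    Complex.polarCoord.symm p = circleMap 0 p.1 p.2 := by
  rw [Complex.polarCoord_symm_apply, circleMap_zero, Complex.exp_mul_I, Complex.ofReal_cos,
    Complex.ofReal_sin]

theorem setIntegral_Ioo_circleMap_eq_smul_circleAverage (f : ℂ → E) (c : ℂ) (r : ℝ) :
    ∫ t in Set.Ioo (-π) π, f (circleMap c r t) = (2 * π) • circleAverage f c r := by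
  have periodic : Function.Periodic (fun t ↦ f (circleMap c r t)) (2 * π) :=
    fun t ↦ by simp only [periodic_circleMap c r t]
  have shift := periodic.intervalIntegral_add_eq (-π) 0
  rw [show -π + 2 * π = π by ring, zero_add] at shift
  rw [← integral_Ioc_eq_integral_Ioo, ← intervalIntegral.integral_of_le (by linarith [pi_pos]),
    shift, circleAverage_def, smul_inv_smul₀ two_pi_pos.ne']

theorem integral_eq_integral_Ioi_smul_circleAverage {f : ℂ → E} (hf : Integrable f) (c : ℂ) :
    ∫ u, f u = ∫ r in Set.Ioi (0 : ℝ), (2 * π * r) • circleAverage f c r := by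
  have integrable_polar := (integrableOn_complex_polarCoord_target_iff _).2 (hf.comp_add_right c)
  rw [← integral_add_right_eq_self f c, ← Complex.integral_comp_polarCoord_symm,
    polarCoord_target, Measure.volume_eq_prod, setIntegral_prod _ integrable_polar]
  refine integral_congr_ae (.of_forall fun r ↦ ?_)
  simp only [complex_polarCoord_symm_eq_circleMap, integral_smul]
  rw [setIntegral_Ioo_circleMap_eq_smul_circleAverage (fun u ↦ f (u + c)),
    circleAverage_map_add_const, smul_smul, mul_comm]

theorem setIntegral_ball_eq_integral_smul_circleAverage {f : ℂ → E} {c : ℂ} {R : ℝ}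
    (hf : IntegrableOn f (ball c R)) (hR : 0 ≤ R) :
    ∫ u in ball c R, f u = ∫ r in 0..R, (2 * π * r) • circleAverage f c r := by
  have average_indicator : ∀ r ∈ Set.Ioi (0 : ℝ),
      (2 * π * r) • circleAverage ((ball c R).indicator f) c r =
        (Set.Iio R).indicator (fun r ↦ (2 * π * r) • circleAverage f c r) r := by
    intro r (hr : 0 < r)
    have mem_ball_iff (t : ℝ) : circleMap c r t ∈ ball c R ↔ r < R := by
      rw [mem_ball, dist_eq_norm, circleMap_sub_center, norm_circleMap_zero, abs_of_pos hr]
    by_cases hrR : r < R <;>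
      simp [circleAverage_def, Set.indicator, mem_ball_iff, hrR]
  rw [← integral_indicator measurableSet_ball, integral_eq_integral_Ioi_smul_circleAverage
      ((integrable_indicator_iff measurableSet_ball).2 hf) c,
    setIntegral_congr_fun measurableSet_Ioi average_indicator,
    setIntegral_indicator measurableSet_Iio, Set.Ioi_inter_Iio,
    ← integral_Ioc_eq_integral_Ioo, ← intervalIntegral.integral_of_le hR]

end PolarCoordinates

section Integrability

theorem locallyIntegrable_inv_norm_sub {E : Type*} [NormedAddCommGroup E] [NormedSpace ℝ E]
    [FiniteDimensional ℝ E] [MeasurableSpace E] [BorelSpace E] (μ : Measure E)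
    [μ.IsAddHaarMeasure] (hE : 2 ≤ Module.finrank ℝ E) (x₀ : E) :
    LocallyIntegrable (fun x ↦ ‖x - x₀‖⁻¹) μ := by
  have at_zero : LocallyIntegrable (fun x : E ↦ ‖x‖⁻¹) μ := by
    refine locallyIntegrable_of_norm_le_rpow (C := 1) (α := 1) (by lia)
      (by exact_mod_cast hE) (.of_forall fun x ↦ ?_) (by fun_prop)
    simp [rpow_neg_one]
  rw [← map_sub_right_eq_self μ x₀] at at_zero
  exact (locallyIntegrable_map_homeomorph (Homeomorph.subRight x₀)).1 at_zero

theorem inv_norm_sub_mul_inv_norm_sub_le {E : Type*} [NormedAddCommGroup E] {a b : E}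
    (hab : a ≠ b) (x : E) :
    ‖x - b‖⁻¹ * ‖x - a‖⁻¹ ≤ ‖a - b‖⁻¹ * (‖x - a‖⁻¹ + ‖x - b‖⁻¹) := by
  rcases eq_or_ne x a with rfl | hxa
  · simp only [sub_self, norm_zero, inv_zero, mul_zero]
    positivity
  rcases eq_or_ne x b with rfl | hxb
  · simp only [sub_self, norm_zero, inv_zero, zero_mul]
    positivity
  have dist_ab : 0 < ‖a - b‖ := norm_pos_iff.2 (sub_ne_zero.2 hab)
  have dist_xa : 0 < ‖x - a‖ := norm_pos_iff.2 (sub_ne_zero.2 hxa)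
  have dist_xb : 0 < ‖x - b‖ := norm_pos_iff.2 (sub_ne_zero.2 hxb)
  have triangle : ‖a - b‖ ≤ ‖x - a‖ + ‖x - b‖ := by
    simpa only [norm_sub_rev a x] using norm_sub_le_norm_sub_add_norm_sub a x b
  calc
    ‖x - b‖⁻¹ * ‖x - a‖⁻¹ = ‖a - b‖⁻¹ * (‖a - b‖ * (‖x - b‖⁻¹ * ‖x - a‖⁻¹)) := by field_simp
    _ ≤ ‖a - b‖⁻¹ * ((‖x - a‖ + ‖x - b‖) * (‖x - b‖⁻¹ * ‖x - a‖⁻¹)) := by gcongr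
    _ = ‖a - b‖⁻¹ * (‖x - a‖⁻¹ + ‖x - b‖⁻¹) := by field_simp; ring

theorem locallyIntegrable_one_div_conj_sub_mul_sub {a b : ℂ} (hab : a ≠ b) :
    LocallyIntegrable (fun u : ℂ ↦ 1 / (conj (u - b) * (u - a))) := by
  have inv_norm (x : ℂ) : LocallyIntegrable (fun u : ℂ ↦ ‖u - x‖⁻¹) :=
    locallyIntegrable_inv_norm_sub volume Complex.finrank_real_complex.ge x
  refine (((inv_norm a).add (inv_norm b)).smul ‖a - b‖⁻¹).mono
    (by fun_prop : Measurable _).aestronglyMeasurable (.of_forall fun u ↦ ?_)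
  calc
    ‖1 / (conj (u - b) * (u - a))‖ = ‖u - b‖⁻¹ * ‖u - a‖⁻¹ := by
      rw [norm_div, norm_one, norm_mul, RCLike.norm_conj, one_div, mul_inv]
    _ ≤ ‖a - b‖⁻¹ * (‖u - a‖⁻¹ + ‖u - b‖⁻¹) := inv_norm_sub_mul_inv_norm_sub_le hab u
    _ ≤ _ := le_abs_self _

theorem integrableOn_ball_one_div_conj_sub_mul_sub {a b : ℂ} (hab : a ≠ b) (c : ℂ) (R : ℝ) :
    IntegrableOn (fun u : ℂ ↦ 1 / (conj (u - b) * (u - a))) (ball c R) :=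
  ((locallyIntegrable_one_div_conj_sub_mul_sub hab).integrableOn_isCompact
    (isCompact_closedBall c R)).mono_set ball_subset_closedBall

end Integrability

section CircleAverages

variable {a b c : ℂ} {r : ℝ}

theorem inv_conj_sub_eq_of_mem_sphere {u : ℂ} (hu : u ∈ sphere c r) (hr : r ≠ 0)
    (hb : b ≠ c) :
    (conj (u - b))⁻¹ =
      -(conj (b - c))⁻¹ * ((u - c) / (u - (c + r ^ 2 / conj (b - c)))) := by
  have norm_u : ‖u - c‖ = r := by rwa [mem_sphere, dist_eq_norm] at hu
  have u_ne_c : u - c ≠ 0 := norm_ne_zero_iff.1 (norm_u ▸ hr)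
  have b_ne_c : conj (b - c) ≠ 0 := (map_ne_zero _).2 (sub_ne_zero.2 hb)
  have conj_u : conj (u - c) * (u - c) = r ^ 2 := by rw [Complex.conj_mul', norm_u]
  have factor : conj (u - b) * (u - c) =
      -conj (b - c) * (u - (c + r ^ 2 / conj (b - c))) := by
    rw [show u - b = (u - c) - (b - c) by ring, map_sub, sub_mul, conj_u]
    field_simp
    ring
  calc
    (conj (u - b))⁻¹ = (u - c) / (conj (u - b) * (u - c)) := by field_simp
    _ = -(conj (b - c))⁻¹ * ((u - c) / (u - (c + r ^ 2 / conj (b - c)))) := by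
      rw [factor, ← inv_neg, mul_comm _⁻¹, ← div_eq_mul_inv, div_div, mul_comm]

theorem circleAverage_inv_conj_sub_smul {E : Type*} [NormedAddCommGroup E] [NormedSpace ℂ E]
    [CompleteSpace E] {f : ℂ → E} (hf : DiffContOnCl ℂ f (ball c r)) (hr : 0 < r)
    (hb : r < ‖b - c‖) :
    circleAverage (fun u ↦ (conj (u - b))⁻¹ • f u) c r =
      -(conj (b - c))⁻¹ • f (c + r ^ 2 / conj (b - c)) := by
  have b_ne_c : b ≠ c := sub_ne_zero.1 (norm_pos_iff.1 (hr.trans hb))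
  have reflection_mem : c + r ^ 2 / conj (b - c) ∈ ball c |r| := by
    rw [mem_ball, dist_eq_norm, add_sub_cancel_left, norm_div, RCLike.norm_conj, norm_pow,
      Complex.norm_real, norm_eq_abs, div_lt_iff₀ (hr.trans hb), sq, abs_of_pos hr]
    gcongr
  rw [← abs_of_pos hr] at hf
  rw [← hf.circleAverage_smul_div reflection_mem, ← circleAverage_fun_smul]
  refine circleAverage_congr_sphere fun u hu ↦ ?_
  rw [abs_of_pos hr] at hu
  simp only [inv_conj_sub_eq_of_mem_sphere hu hr.ne' b_ne_c, smul_smul]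

theorem circleAverage_one_div_conj_sub_mul_sub (hr : 0 < r) (ha : r < ‖a - c‖)
    (hb : r < ‖b - c‖) :
    circleAverage (fun u ↦ 1 / (conj (u - b) * (u - a))) c r =
      1 / ((a - c) * conj (b - c) - r ^ 2) := by
  have b_ne_c : conj (b - c) ≠ 0 := (map_ne_zero _).2 (norm_pos_iff.1 (hr.trans hb))
  have holomorphic : DiffContOnCl ℂ (fun u ↦ (u - a)⁻¹) (ball c r) := by
    refine ((differentiable_id.sub_const a).diffContOnCl).inv fun u hu ↦ sub_ne_zero.2 ?_
    rintro rfl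
    rw [closure_ball c hr.ne', mem_closedBall, dist_eq_norm] at hu
    exact ha.not_ge hu
  calc
    _ = circleAverage (fun u ↦ (conj (u - b))⁻¹ • (u - a)⁻¹) c r := by
      simp only [one_div, mul_inv, smul_eq_mul]
    _ = -(conj (b - c))⁻¹ • (c + r ^ 2 / conj (b - c) - a)⁻¹ :=
      circleAverage_inv_conj_sub_smul holomorphic hr hb
    _ = 1 / ((a - c) * conj (b - c) - r ^ 2) := by
      rw [smul_eq_mul, neg_mul, ← mul_inv, ← inv_neg, one_div]
      congr 1
      field_simp
      ring

end CircleAverages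

section RadialIntegral

theorem one_sub_mem_slitPlane {z : ℂ} (hz : ‖z‖ ≤ 1) (hz1 : z ≠ 1) :
    1 - z ∈ Complex.slitPlane := by
  rw [Complex.mem_slitPlane_iff_not_le_zero, Complex.le_def]
  rintro ⟨hre, him⟩
  simp only [Complex.sub_re, Complex.one_re, Complex.zero_re, Complex.sub_im, Complex.one_im,
    Complex.zero_im] at hre him
  refine hz1 (Complex.ext ?_ ?_)
  · simp only [Complex.one_re]
    linarith [Complex.re_le_norm z]
  · simp only [Complex.one_im]
    linarith

variable {K : ℂ} {R : ℝ}

theorem one_sub_sq_div_mem_slitPlane (hK : R ^ 2 ≤ ‖K‖) (hKR : K ≠ R ^ 2) {r : ℝ}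
    (hr : r ∈ Set.Icc 0 R) : 1 - (r : ℂ) ^ 2 / K ∈ Complex.slitPlane := by
  have sq_le : r ^ 2 ≤ R ^ 2 := pow_le_pow_left₀ hr.1 hr.2 2
  have norm_sq : ‖(r : ℂ) ^ 2‖ = r ^ 2 := by
    rw [norm_pow, Complex.norm_real, norm_eq_abs, sq_abs]
  refine one_sub_mem_slitPlane ?_ fun h ↦ hKR ?_
  · rw [norm_div, norm_sq]
    exact div_le_one_of_le₀ (sq_le.trans hK) (norm_nonneg K)
  · have K_eq : (r : ℂ) ^ 2 = K := eq_of_div_eq_one h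
    rw [← K_eq, norm_sq] at hK
    rw [← K_eq]
    exact_mod_cast sq_le.antisymm hK

theorem integral_smul_one_div_sub_sq (hR : 0 ≤ R) (hK : R ^ 2 ≤ ‖K‖) (hKR : K ≠ R ^ 2) :
    ∫ r in 0..R, (2 * π * r) • (1 / (K - r ^ 2)) = -π * Complex.log (1 - R ^ 2 / K) := by
  have hK0 : K ≠ 0 := by
    rintro rfl
    have hR0 : R ^ 2 = 0 := (norm_zero (E := ℂ) ▸ hK).antisymm (sq_nonneg R)
    exact hKR (by exact_mod_cast hR0.symm)
  have slit {r : ℝ} (hr : r ∈ Set.uIcc 0 R) : 1 - (r : ℂ) ^ 2 / K ∈ Complex.slitPlane :=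
    one_sub_sq_div_mem_slitPlane hK hKR (Set.uIcc_of_le hR ▸ hr)
  have sub_sq_ne {r : ℝ} (hr : r ∈ Set.uIcc 0 R) : K - (r : ℂ) ^ 2 ≠ 0 := by
    rw [show K - (r : ℂ) ^ 2 = (1 - (r : ℂ) ^ 2 / K) * K by field_simp]
    exact mul_ne_zero (Complex.slitPlane_ne_zero (slit hr)) hK0
  have antiderivative (r : ℝ) (hr : r ∈ Set.uIcc 0 R) :
      HasDerivAt (fun r : ℝ ↦ -π * Complex.log (1 - (r : ℂ) ^ 2 / K))
        ((2 * π * r) • (1 / (K - r ^ 2))) r := by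
    have inner : HasDerivAt (fun r : ℝ ↦ 1 - (r : ℂ) ^ 2 / K) (-(2 * r / K)) r := by
      simpa using ((((hasDerivAt_id (r : ℂ)).pow 2).div_const K).const_sub 1).comp_ofReal
    refine ((inner.clog_real (slit hr)).const_mul (-π : ℂ)).congr_deriv ?_
    have ne := sub_sq_ne hr
    rw [show 1 - (r : ℂ) ^ 2 / K = (K - r ^ 2) / K by field_simp, Complex.real_smul]
    push_cast
    field_simp
  have continuousOn_inv : ContinuousOn (fun r : ℝ ↦ 1 / (K - (r : ℂ) ^ 2)) (Set.uIcc 0 R) :=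
    continuousOn_const.div (by fun_prop) fun _ ↦ sub_sq_ne
  have continuous_weight : Continuous fun r : ℝ ↦ 2 * π * r := by fun_prop
  rw [intervalIntegral.integral_eq_sub_of_hasDerivAt antiderivative
    (continuous_weight.continuousOn.smul continuousOn_inv).intervalIntegrable]
  simp

end RadialIntegral

theorem eq_of_mul_conj_eq_sq {a b : ℂ} {R : ℝ} (hR : 0 < R) (ha : R ≤ ‖a‖) (hb : R ≤ ‖b‖)
    (h : a * conj b = R ^ 2) : a = b := by
  have norm_mul_norm : ‖a‖ * ‖b‖ = R * R := by
    rw [← RCLike.norm_conj b, ← norm_mul, h, norm_pow, Complex.norm_real, norm_of_nonneg hR.le, sq]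
  have norm_b : ‖b‖ = R := by nlinarith
  have b_ne_zero : conj b ≠ 0 := (map_ne_zero _).2 (norm_pos_iff.1 (norm_b ▸ hR))
  refine mul_right_cancel₀ b_ne_zero ?_
  rw [h, Complex.mul_conj', norm_b]

theorem setIntegral_ball_one_div_conj_sub_mul_sub {a b c : ℂ} {R : ℝ} (hab : a ≠ b) (hR : 0 < R)
    (ha : R ≤ ‖a - c‖) (hb : R ≤ ‖b - c‖) :
    ∫ u in ball c R, 1 / (conj (u - b) * (u - a)) =
      -π * Complex.log (1 - R ^ 2 / ((a - c) * conj (b - c))) := by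
  have sq_le_norm : R ^ 2 ≤ ‖(a - c) * conj (b - c)‖ := by
    rw [norm_mul, RCLike.norm_conj, sq]
    gcongr
  have ne_sq : (a - c) * conj (b - c) ≠ R ^ 2 :=
    fun h ↦ hab (sub_left_injective (eq_of_mul_conj_eq_sq hR ha hb h))
  rw [setIntegral_ball_eq_integral_smul_circleAverage
      (integrableOn_ball_one_div_conj_sub_mul_sub hab c R) hR.le,
    ← integral_smul_one_div_sub_sq hR.le sq_le_norm ne_sq]
  refine intervalIntegral.integral_congr_Ioo_of_le hR.le fun r hr ↦ ?_
  simp only [circleAverage_one_div_conj_sub_mul_sub hr.1 (hr.2.trans_le ha) (hr.2.trans_le hb)]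

section Trigonometry

theorem one_sub_I_mul_cot {z : ℂ} (hz : Complex.sin z ≠ 0) :
    1 - Complex.I * Complex.cot z =
      (Complex.sin z)⁻¹ * (-Complex.I * Complex.exp (z * Complex.I)) := by
  rw [Complex.exp_mul_I, Complex.cot_eq_cos_div_sin]
  field_simp
  linear_combination Complex.sin z * Complex.I_sq

theorem one_sub_exp_neg_two_mul_I (z : ℂ) :
    1 - Complex.exp (-(2 * z * Complex.I)) =
      2 * Complex.sin z * Complex.exp ((π / 2 - z) * Complex.I) := by
  have exp_shift : Complex.exp ((π / 2 - z) * Complex.I) =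
      Complex.I * Complex.exp (-z * Complex.I) := by
    rw [sub_eq_add_neg, add_mul, Complex.exp_add, Complex.exp_pi_div_two_mul_I]
  have exp_double : Complex.exp (-(2 * z * Complex.I)) = Complex.exp (-z * Complex.I) ^ 2 := by
    rw [← Complex.exp_nat_mul]
    push_cast
    ring_nf
  have exp_cancel : Complex.exp (-z * Complex.I) * Complex.exp (z * Complex.I) = 1 := by
    rw [← Complex.exp_add, neg_mul, neg_add_cancel, Complex.exp_zero]
  rw [exp_shift, exp_double, Complex.two_sin]
  linear_combination -exp_cancel + (Complex.exp (-z * Complex.I) * Complex.exp (z * Complex.I) -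
    Complex.exp (-z * Complex.I) ^ 2) * Complex.I_sq

theorem conj_neg_one_sub_I_mul_ofReal (x : ℝ) :
    conj (-1 - Complex.I * (x : ℂ)) = -(1 - Complex.I * x) := by
  rw [map_sub, map_neg, map_one, map_mul, Complex.conj_I, Complex.conj_ofReal]
  ring

variable {θ : ℝ}

theorem norm_one_sub_I_mul_cot (hθ : 0 < sin θ) :
    ‖1 - Complex.I * (cot θ : ℂ)‖ = (sin θ)⁻¹ := by
  have sin_ne : Complex.sin θ ≠ 0 := by exact_mod_cast hθ.ne'
  rw [Complex.ofReal_cot, one_sub_I_mul_cot sin_ne, norm_mul, norm_mul, norm_neg, Complex.norm_I,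
    Complex.norm_exp_ofReal_mul_I, mul_one, mul_one, norm_inv, ← Complex.ofReal_sin,
    Complex.norm_real, norm_of_nonneg hθ.le]

theorem norm_neg_one_sub_I_mul_cot (hθ : 0 < sin θ) :
    ‖-1 - Complex.I * (cot θ : ℂ)‖ = (sin θ)⁻¹ := by
  rw [← RCLike.norm_conj, conj_neg_one_sub_I_mul_ofReal, norm_neg, norm_one_sub_I_mul_cot hθ]

theorem inv_sin_sq_div_eq_exp (hθ : sin θ ≠ 0) :
    ((sin θ)⁻¹ : ℝ) ^ 2 /
        ((1 - Complex.I * (cot θ : ℂ)) * conj (-1 - Complex.I * (cot θ : ℂ))) =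
      Complex.exp (-(2 * θ * Complex.I)) := by
  have sin_ne : Complex.sin θ ≠ 0 := by exact_mod_cast hθ
  have exp_double : Complex.exp (2 * θ * Complex.I) = Complex.exp (θ * Complex.I) ^ 2 := by
    rw [← Complex.exp_nat_mul]
    push_cast
    ring_nf
  have denominator : (1 - Complex.I * (cot θ : ℂ)) * conj (-1 - Complex.I * (cot θ : ℂ)) =
      (Complex.sin θ)⁻¹ ^ 2 * Complex.exp (2 * θ * Complex.I) := by
    rw [conj_neg_one_sub_I_mul_ofReal, Complex.ofReal_cot, one_sub_I_mul_cot sin_ne, exp_double]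
    linear_combination
      -(Complex.sin θ)⁻¹ ^ 2 * Complex.exp (θ * Complex.I) ^ 2 * Complex.I_sq
  rw [denominator, Complex.ofReal_inv, Complex.ofReal_sin,
    div_mul_cancel_left₀ (pow_ne_zero 2 (inv_ne_zero sin_ne)), Complex.exp_neg]

theorem log_one_sub_exp_neg_two_mul_I (hθ : θ ∈ Set.Ioo 0 π) :
    Complex.log (1 - Complex.exp (-(2 * θ * Complex.I))) =
      Real.log (2 * sin θ) + (π / 2 - θ) * Complex.I := by
  have two_sin_pos : 0 < 2 * sin θ := mul_pos two_pos (sin_pos_of_mem_Ioo hθ)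
  have im_eq : ((π / 2 - θ : ℂ) * Complex.I).im = π / 2 - θ := by
    rw [Complex.mul_I_im]
    simp
  rw [one_sub_exp_neg_two_mul_I, ← Complex.ofReal_sin, ← Complex.ofReal_ofNat,
    ← Complex.ofReal_mul, Complex.log_ofReal_mul two_sin_pos (Complex.exp_ne_zero _),
    Complex.ofReal_ofNat, Complex.log_exp]
  · linarith [hθ.2, pi_pos]
  · linarith [hθ.1, pi_pos]

end Trigonometry

/-- For `θ ∈ (0,π)`, the integral `I_θ = -(1/π)∫_{D_θ} 1/(conj(u+1)·(u-1)) da(u)` exists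
and equals `ln(2 sin θ) + i(π/2 - θ)`. -/
theorem integral_kernel_disc_eq
    (θ : ℝ) (hθ : θ ∈ Set.Ioo (0 : ℝ) Real.pi) :
    IntegrableOn (fun u : ℂ => 1 / ((starRingEnd ℂ) (u + 1) * (u - 1))) (Dtheta θ) volume ∧
    -(1 / Real.pi : ℂ) * (∫ u in Dtheta θ, 1 / ((starRingEnd ℂ) (u + 1) * (u - 1))) =
      (Real.log (2 * Real.sin θ) : ℂ) + Complex.I * ((Real.pi / 2 : ℝ) - θ) := by
  have sin_pos : 0 < sin θ := sin_pos_of_mem_Ioo hθ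
  have one_ne_neg_one : (1 : ℂ) ≠ -1 := by norm_num
  have integrable := integrableOn_ball_one_div_conj_sub_mul_sub one_ne_neg_one
    (Complex.I * (cot θ : ℂ)) (sin θ)⁻¹
  have integral := setIntegral_ball_one_div_conj_sub_mul_sub one_ne_neg_one (inv_pos.2 sin_pos)
    (norm_one_sub_I_mul_cot sin_pos).ge (norm_neg_one_sub_I_mul_cot sin_pos).ge
  rw [inv_sin_sq_div_eq_exp sin_pos.ne', log_one_sub_exp_neg_two_mul_I hθ] at integral
  simp only [sub_neg_eq_add] at integrable integral
  refine ⟨integrable, ?_⟩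
  have pi_ne : (π : ℂ) ≠ 0 := by exact_mod_cast pi_ne_zero
  rw [Dtheta, integral]
  push_cast
  field_simp
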